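/- There exists a unique ℂ-algebra homomorphism Δ_R : Γ → Γ ⊗ A satisfying Δ_R(x) = x ⊗ x, Δ_R(x⁻¹) = x⁻¹ ⊗ x⁻¹, Δ_R(y) = y ⊗ 1 + x ⊗ y, Δ_R(dx) = dx ⊗ x, and Δ_R(dy) = dy ⊗ 1 + dx ⊗ y. (In particular these assignments preserve all the defining relations of Γ.) -/

import Mathlib

/-!
By the universal property of the presentation of `Γ`, an algebra homomorphism out of `Γ` is the same
as a choice of images of the five generators satisfying the ten defining relations. Uniqueness is
thus immediate, and existence amounts to verifying (`coactionGen_rel`) that the prescribed elements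
of `Γ ⊗ A` satisfy those relations. Each relation is checked by expanding both sides and reordering
each tensor leg: in `Γ` every word is rewritten with the differentials on the left and `y` before
`x`, in `A` with `y` before `x`; what remains is an identity between coefficients in `ℂ`.
The hypothesis `q ≠ 0` enters through `q⁻¹ * q = 1`: moving `x` past `dx` on the left leg gives
`q⁻¹`, which cancels the `q` from moving `x` past `y` on the right leg.
-/

open scoped TensorProduct
open MulOpposite

noncomputable section

/-- Relations for the extended quantum plane: `x*y = q•(y*x)`, `x*x⁻¹ = 1 = x⁻¹*x`.
Generators: `0 = x`, `1 = x⁻¹`, `2 = y`. -/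
inductive ARel (q : ℂ) : FreeAlgebra ℂ (Fin 3) → FreeAlgebra ℂ (Fin 3) → Prop
  | xy : ARel q (FreeAlgebra.ι ℂ 0 * FreeAlgebra.ι ℂ 2) (q • (FreeAlgebra.ι ℂ 2 * FreeAlgebra.ι ℂ 0))
  | xxinv : ARel q (FreeAlgebra.ι ℂ 0 * FreeAlgebra.ι ℂ 1) 1
  | xinvx : ARel q (FreeAlgebra.ι ℂ 1 * FreeAlgebra.ι ℂ 0) 1

/-- The (unital extension of the) quantum plane algebra `A`. -/
abbrev QA (q : ℂ) := RingQuot (ARel q)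

/-- The generator `x` of `A`. -/
def aX (q : ℂ) : QA q := RingQuot.mkAlgHom ℂ (ARel q) (FreeAlgebra.ι ℂ 0)

/-- The generator `x⁻¹` of `A`. -/
def aXinv (q : ℂ) : QA q := RingQuot.mkAlgHom ℂ (ARel q) (FreeAlgebra.ι ℂ 1)

/-- The generator `y` of `A`. -/
def aY (q : ℂ) : QA q := RingQuot.mkAlgHom ℂ (ARel q) (FreeAlgebra.ι ℂ 2)

/-- Relations for the differential algebra `Γ` of the extended quantum plane.
Generators: `0 = x`, `1 = x⁻¹`, `2 = y`, `3 = dx`, `4 = dy`. -/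
inductive GRel (q : ℂ) : FreeAlgebra ℂ (Fin 5) → FreeAlgebra ℂ (Fin 5) → Prop
  | xy : GRel q (FreeAlgebra.ι ℂ 0 * FreeAlgebra.ι ℂ 2) (q • (FreeAlgebra.ι ℂ 2 * FreeAlgebra.ι ℂ 0))
  | xxinv : GRel q (FreeAlgebra.ι ℂ 0 * FreeAlgebra.ι ℂ 1) 1
  | xinvx : GRel q (FreeAlgebra.ι ℂ 1 * FreeAlgebra.ι ℂ 0) 1
  | xdx : GRel q (FreeAlgebra.ι ℂ 0 * FreeAlgebra.ι ℂ 3) (q⁻¹ • (FreeAlgebra.ι ℂ 3 * FreeAlgebra.ι ℂ 0))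
  | xdy : GRel q (FreeAlgebra.ι ℂ 0 * FreeAlgebra.ι ℂ 4) (FreeAlgebra.ι ℂ 4 * FreeAlgebra.ι ℂ 0)
  | ydx : GRel q (FreeAlgebra.ι ℂ 2 * FreeAlgebra.ι ℂ 3)
      (q⁻¹ • (FreeAlgebra.ι ℂ 3 * FreeAlgebra.ι ℂ 2) +
        (q⁻¹ - 1) • (FreeAlgebra.ι ℂ 4 * FreeAlgebra.ι ℂ 0))
  | ydy : GRel q (FreeAlgebra.ι ℂ 2 * FreeAlgebra.ι ℂ 4) (q⁻¹ • (FreeAlgebra.ι ℂ 4 * FreeAlgebra.ι ℂ 2))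
  | dxdx : GRel q (FreeAlgebra.ι ℂ 3 * FreeAlgebra.ι ℂ 3) 0
  | dxdy : GRel q (FreeAlgebra.ι ℂ 3 * FreeAlgebra.ι ℂ 4) (-(FreeAlgebra.ι ℂ 4 * FreeAlgebra.ι ℂ 3))
  | dydy : GRel q (FreeAlgebra.ι ℂ 4 * FreeAlgebra.ι ℂ 4) 0

/-- The differential algebra `Γ` of the extended quantum plane. -/
abbrev QG (q : ℂ) := RingQuot (GRel q)

/-- The generator `x` of `Γ`. -/
def gX (q : ℂ) : QG q := RingQuot.mkAlgHom ℂ (GRel q) (FreeAlgebra.ι ℂ 0)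

/-- The generator `x⁻¹` of `Γ`. -/
def gXinv (q : ℂ) : QG q := RingQuot.mkAlgHom ℂ (GRel q) (FreeAlgebra.ι ℂ 1)

/-- The generator `y` of `Γ`. -/
def gY (q : ℂ) : QG q := RingQuot.mkAlgHom ℂ (GRel q) (FreeAlgebra.ι ℂ 2)

/-- The generator `dx` of `Γ`. -/
def gDX (q : ℂ) : QG q := RingQuot.mkAlgHom ℂ (GRel q) (FreeAlgebra.ι ℂ 3)

/-- The generator `dy` of `Γ`. -/
def gDY (q : ℂ) : QG q := RingQuot.mkAlgHom ℂ (GRel q) (FreeAlgebra.ι ℂ 4)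

section Relations

variable (q : ℂ)

lemma aX_mul_aY : aX q * aY q = q • (aY q * aX q) := by
  simpa [aX, aY] using RingQuot.mkAlgHom_rel ℂ (ARel.xy (q := q))

lemma aX_mul_aXinv : aX q * aXinv q = 1 := by
  simpa [aX, aXinv] using RingQuot.mkAlgHom_rel ℂ (ARel.xxinv (q := q))

lemma aXinv_mul_aX : aXinv q * aX q = 1 := by
  simpa [aX, aXinv] using RingQuot.mkAlgHom_rel ℂ (ARel.xinvx (q := q))

lemma gX_mul_gY : gX q * gY q = q • (gY q * gX q) := by
  simpa [gX, gY] using RingQuot.mkAlgHom_rel ℂ (GRel.xy (q := q))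

lemma gX_mul_gXinv : gX q * gXinv q = 1 := by
  simpa [gX, gXinv] using RingQuot.mkAlgHom_rel ℂ (GRel.xxinv (q := q))

lemma gXinv_mul_gX : gXinv q * gX q = 1 := by
  simpa [gX, gXinv] using RingQuot.mkAlgHom_rel ℂ (GRel.xinvx (q := q))

lemma gX_mul_gDX : gX q * gDX q = q⁻¹ • (gDX q * gX q) := by
  simpa [gX, gDX] using RingQuot.mkAlgHom_rel ℂ (GRel.xdx (q := q))

lemma gX_mul_gDY : gX q * gDY q = gDY q * gX q := by
  simpa [gX, gDY] using RingQuot.mkAlgHom_rel ℂ (GRel.xdy (q := q))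

lemma gY_mul_gDX : gY q * gDX q = q⁻¹ • (gDX q * gY q) + (q⁻¹ - 1) • (gDY q * gX q) := by
  simpa [gX, gY, gDX, gDY] using RingQuot.mkAlgHom_rel ℂ (GRel.ydx (q := q))

lemma gY_mul_gDY : gY q * gDY q = q⁻¹ • (gDY q * gY q) := by
  simpa [gY, gDY] using RingQuot.mkAlgHom_rel ℂ (GRel.ydy (q := q))

lemma gDX_mul_gDX : gDX q * gDX q = 0 := by
  simpa [gDX] using RingQuot.mkAlgHom_rel ℂ (GRel.dxdx (q := q))

lemma gDX_mul_gDY : gDX q * gDY q = -(gDY q * gDX q) := by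
  simpa [gDX, gDY] using RingQuot.mkAlgHom_rel ℂ (GRel.dxdy (q := q))

lemma gDY_mul_gDY : gDY q * gDY q = 0 := by
  simpa [gDY] using RingQuot.mkAlgHom_rel ℂ (GRel.dydy (q := q))

end Relations

/-- The prescribed images of the generators `x, x⁻¹, y, dx, dy` of `Γ` under the right coaction. -/
def coactionGen (q : ℂ) : Fin 5 → QG q ⊗[ℂ] QA q :=
  ![gX q ⊗ₜ[ℂ] aX q, gXinv q ⊗ₜ[ℂ] aXinv q, gY q ⊗ₜ[ℂ] 1 + gX q ⊗ₜ[ℂ] aY q,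
    gDX q ⊗ₜ[ℂ] aX q, gDY q ⊗ₜ[ℂ] 1 + gDX q ⊗ₜ[ℂ] aY q]

/-- The prescribed images of the generators satisfy the defining relations of `Γ`. -/
lemma coactionGen_rel (q : ℂ) (hq : q ≠ 0) ⦃a b : FreeAlgebra ℂ (Fin 5)⦄ (h : GRel q a b) :
    FreeAlgebra.lift ℂ (coactionGen q) a = FreeAlgebra.lift ℂ (coactionGen q) b := by
  cases h <;>
    simp only [map_mul, map_add, map_neg, map_smul, map_one, map_zero, FreeAlgebra.lift_ι_apply,
      coactionGen, Matrix.cons_val, mul_add, add_mul, Algebra.TensorProduct.tmul_mul_tmul,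
      mul_one, one_mul, aX_mul_aY, aX_mul_aXinv, aXinv_mul_aX, gX_mul_gY, gX_mul_gXinv,
      gXinv_mul_gX, gX_mul_gDX, gX_mul_gDY, gY_mul_gDX, gY_mul_gDY, gDX_mul_gDX, gDX_mul_gDY,
      gDY_mul_gDY, TensorProduct.add_tmul, ← TensorProduct.smul_tmul', TensorProduct.tmul_smul,
      TensorProduct.neg_tmul, TensorProduct.zero_tmul, Algebra.TensorProduct.one_def] <;>
    first | abel1 | (match_scalars <;> field_simp <;> ring)

/-- There exists a unique ℂ-algebra homomorphism `Δ_R : Γ → Γ ⊗ A` with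
`Δ_R(x) = x ⊗ x`, `Δ_R(x⁻¹) = x⁻¹ ⊗ x⁻¹`, `Δ_R(y) = y ⊗ 1 + x ⊗ y`,
`Δ_R(dx) = dx ⊗ x`, `Δ_R(dy) = dy ⊗ 1 + dx ⊗ y`. -/
theorem right_coaction_exists_unique (q : ℂ) (hq : q ≠ 0) :
    ∃! ΔR : QG q →ₐ[ℂ] QG q ⊗[ℂ] QA q,
      ΔR (gX q) = gX q ⊗ₜ[ℂ] aX q ∧
      ΔR (gXinv q) = gXinv q ⊗ₜ[ℂ] aXinv q ∧
      ΔR (gY q) = gY q ⊗ₜ[ℂ] 1 + gX q ⊗ₜ[ℂ] aY q ∧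
      ΔR (gDX q) = gDX q ⊗ₜ[ℂ] aX q ∧
      ΔR (gDY q) = gDY q ⊗ₜ[ℂ] 1 + gDX q ⊗ₜ[ℂ] aY q := by
  refine ⟨RingQuot.liftAlgHom ℂ ⟨FreeAlgebra.lift ℂ (coactionGen q), coactionGen_rel q hq⟩,
    ?_, ?_⟩
  · simp [gX, gXinv, gY, gDX, gDY, coactionGen]
  · rintro f ⟨hx, hxinv, hy, hdx, hdy⟩
    apply RingQuot.ringQuot_ext'
    apply FreeAlgebra.hom_ext
    funext i
    fin_cases i
    · simpa [coactionGen, gX, gXinv, gY, gDX, gDY] using hx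
    · simpa [coactionGen, gX, gXinv, gY, gDX, gDY] using hxinv
    · simpa [coactionGen, gX, gXinv, gY, gDX, gDY] using hy
    · simpa [coactionGen, gX, gXinv, gY, gDX, gDY] using hdx
    · simpa [coactionGen, gX, gXinv, gY, gDX, gDY] using hdy
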